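/- Let α ∈ [1,2). Let M_α be the 6×6 real matrix with rows: row 1 = (0, 2^{−(α+1)}, 0, 2^{−(α+1)}, 0, −2^{−α}); row 2 = (2^{−(α+1)}α, 0, 2^{−(α+1)}α, 0, −2^{−α}α, 0); row 3 = (0, 2^{−(α+1)}, 0, 2^{−(α+1)}, 0, −2^{−α}); row 4 = (2^{−(α+1)}α, 0, 2^{−(α+1)}α, 0, −2^{−α}α, 0); row 5 = (0, 1, 0, 1, 0, −2); row 6 = (α, 0, α, 0, −2α, 0). Then the characteristic polynomial of M_α equals X⁶ − α(2 − 2^{−α})² X⁴; equivalently, the eigenvalues of M_α are 0 with algebraic multiplicity 4 and ±(2 − 2^{−α})√α, each with multiplicity 1. -/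

import Mathlib

open Polynomial

/-- `1/C_α` times the Jacobian of the `α`-point-vortex vector field at the stationary
three-vortex configuration `z₁* = (−1,0)`, `z₂* = (1,0)`, `z₃* = (0,0)` with intensities
`(1, 1, −2^{−α})`, as a `6 × 6` matrix in the coordinates `(p₁,q₁,p₂,q₂,p₃,q₃)`. -/
noncomputable def threeVortexJacobian (α : ℝ) : Matrix (Fin 6) (Fin 6) ℝ :=
  !![0, (2:ℝ) ^ (-(α+1)), 0, (2:ℝ) ^ (-(α+1)), 0, -(2:ℝ) ^ (-α);
     (2:ℝ) ^ (-(α+1)) * α, 0, (2:ℝ) ^ (-(α+1)) * α, 0, -(2:ℝ) ^ (-α) * α, 0;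
     0, (2:ℝ) ^ (-(α+1)), 0, (2:ℝ) ^ (-(α+1)), 0, -(2:ℝ) ^ (-α);
     (2:ℝ) ^ (-(α+1)) * α, 0, (2:ℝ) ^ (-(α+1)) * α, 0, -(2:ℝ) ^ (-α) * α, 0;
     0, 1, 0, 1, 0, -2;
     α, 0, α, 0, -2 * α, 0]

/-!
Grouping the coordinates by vortex, the Jacobian is the Kronecker product of the rank-one matrix
`v wᵀ` with `v = (2^{-(α+1)}, 2^{-(α+1)}, 1)`, `w = (1, 1, -2)` and the `2 × 2` matrix
`S = !![0, 1; α, 0]`. Since `v wᵀ ⊗ S = (v ⊗ S) (wᵀ ⊗ 1)`, exchanging the two factors shows that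
its characteristic polynomial is, up to a power of `X`, that of `(w ⬝ v) S`, where
`w ⬝ v = 2^{-α} - 2`.
-/

open Matrix
open scoped Kronecker

section CommRing

variable {R : Type*} [CommRing R]

theorem charpoly_vecMulVec_kronecker {m n : Type*} [Fintype m] [DecidableEq m] [Nonempty m]
    [Fintype n] [DecidableEq n] (v w : m → R) (S : Matrix n n R) :
    (vecMulVec v w ⊗ₖ S).charpoly =
      X ^ ((Fintype.card m - 1) * Fintype.card n) * ((w ⬝ᵥ v) • S).charpoly := by
  let A : Matrix (m × n) (Unit × n) R := replicateCol Unit v ⊗ₖ S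
  let B : Matrix (Unit × n) (m × n) R := replicateRow Unit w ⊗ₖ 1
  let e : n ≃ Unit × n := (Equiv.uniqueProd n Unit).symm
  have hAB : A * B = vecMulVec v w ⊗ₖ S := by
    rw [← mul_kronecker_mul, Matrix.mul_one, ← vecMulVec_eq]
  have hBA : B * A = reindex e e ((w ⬝ᵥ v) • S) := by
    rw [← mul_kronecker_mul, Matrix.one_mul]
    rfl
  have hcard : Fintype.card (Unit × n) ≤ Fintype.card (m × n) := by
    simpa using Nat.le_mul_of_pos_left (Fintype.card n) (Fintype.card_pos (α := m))
  rw [← hAB, charpoly_mul_comm_of_le A B hcard, hBA, charpoly_reindex, Fintype.card_prod,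
    Fintype.card_prod, Fintype.card_unit, Nat.sub_mul]

theorem charpoly_fin_two_of_diag_eq_zero (a b : R) :
    !![0, a; b, 0].charpoly = X ^ 2 - C (a * b) := by
  nontriviality R
  simp [charpoly_fin_two, trace_fin_two, det_fin_two, sub_eq_add_neg]

end CommRing

theorem two_mul_two_rpow_neg_add_one (α : ℝ) : 2 * (2 : ℝ) ^ (-(α + 1)) = 2 ^ (-α) := by
  rw [neg_add, ← sub_eq_add_neg, Real.rpow_sub_one two_ne_zero, mul_div_cancel₀ _ two_ne_zero]

theorem threeVortexJacobian_eq_reindex_kronecker (α : ℝ) :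
    threeVortexJacobian α = reindex finProdFinEquiv finProdFinEquiv
      (vecMulVec ![2 ^ (-(α + 1)), 2 ^ (-(α + 1)), 1] ![1, 1, -2] ⊗ₖ !![0, 1; α, 0]) := by
  rw [threeVortexJacobian, ← two_mul_two_rpow_neg_add_one α]
  ext i j
  fin_cases i <;> fin_cases j <;>
    simp [finProdFinEquiv, Fin.divNat, Fin.modNat, mul_comm]

theorem three_vortex_jacobian_charpoly_general (α : ℝ) :
    (threeVortexJacobian α).charpoly
      = X ^ 6 - C (α * (2 - (2:ℝ) ^ (-α)) ^ 2) * X ^ 4 := by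
  have dot_eq : ![1, 1, -2] ⬝ᵥ ![(2:ℝ) ^ (-(α + 1)), 2 ^ (-(α + 1)), 1] = 2 ^ (-α) - 2 := by
    rw [← two_mul_two_rpow_neg_add_one α, vec3_dotProduct']
    ring
  have smul_eq (c : ℝ) : c • !![0, 1; α, 0] = !![0, c; c * α, 0] := by
    simp
  rw [threeVortexJacobian_eq_reindex_kronecker, charpoly_reindex, charpoly_vecMulVec_kronecker,
    dot_eq, smul_eq, charpoly_fin_two_of_diag_eq_zero]
  calc X ^ ((Fintype.card (Fin 3) - 1) * Fintype.card (Fin 2)) *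
        (X ^ 2 - C ((2 ^ (-α) - 2) * ((2 ^ (-α) - 2) * α)))
      = X ^ 4 * (X ^ 2 - C (α * (2 - (2:ℝ) ^ (-α)) ^ 2)) := by
        congr 3
        ring
    _ = X ^ 6 - C (α * (2 - (2:ℝ) ^ (-α)) ^ 2) * X ^ 4 := by ring

/-- the characteristic polynomial of `M_α` is
`X⁶ − α (2 − 2^{−α})² X⁴`; equivalently, the eigenvalues of `M_α` are `0` (with algebraic
multiplicity 4) and `±(2 − 2^{−α})√α` (each with multiplicity 1). -/
theorem three_vortex_jacobian_charpoly
    (α : ℝ) (hα : 1 ≤ α) (hα' : α < 2) :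
    (threeVortexJacobian α).charpoly
      = X ^ 6 - C (α * (2 - (2:ℝ) ^ (-α)) ^ 2) * X ^ 4 :=
  three_vortex_jacobian_charpoly_general α
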